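/- For m > 0 and b > 0, (b^m / (2π)) ∫₀^∞ 1/(√p (1+p)(b+1+p)^m) dp = (1/2) I_{b/(1+b)}(m, 1/2), where I_x(a,c) is the regularized incomplete beta function. -/

import Mathlib

open MeasureTheory Real Set

noncomputable def incBeta (x a b : ℝ) : ℝ :=
  ∫ t in (0:ℝ)..x, t ^ (a - 1) * (1 - t) ^ (b - 1)

noncomputable def regIncBeta (x a b : ℝ) : ℝ := incBeta x a b / incBeta 1 a b

/-!
Write `(b / (b + 1 + p)) ^ m = m * (1 + p) * ∫₀ᵇ s ^ (m - 1) * (1 + s + p) ^ (-(m + 1)) ds` and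
integrate over `p` first. The inner integral against `p ^ (-c)`, where `c = 1 / 2` in the theorem,
is a complete beta integral of the second kind, equal to `(1 + s) ^ (-(m + c))` times a constant.
The remaining integral `∫₀ᵇ s ^ (m - 1) * (1 + s) ^ (-(m + c)) ds` becomes the incomplete beta
function under `t = s / (1 + s)`, and Euler's reflection formula evaluates the constant.
All three integrals come from the single change of variables `t = u / (q + u)`.
-/

open ProbabilityTheory (beta)

section BetaIntegral

variable {a c : ℝ}

lemma ofReal_rpow_mul_one_sub_rpow {t : ℝ} (ht : t ∈ Icc 0 1) :
    ((t ^ (a - 1) * (1 - t) ^ (c - 1) : ℝ) : ℂ) =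
      (t : ℂ) ^ ((a : ℂ) - 1) * (1 - (t : ℂ)) ^ ((c : ℂ) - 1) := by
  rw [Complex.ofReal_mul, Complex.ofReal_cpow ht.1, Complex.ofReal_cpow (sub_nonneg.2 ht.2)]
  push_cast
  rfl

lemma integrableOn_rpow_mul_one_sub_rpow (ha : 0 < a) (hc : 0 < c) :
    IntegrableOn (fun t : ℝ ↦ t ^ (a - 1) * (1 - t) ^ (c - 1)) (Ioc 0 1) := by
  have hcpow := (intervalIntegrable_iff_integrableOn_Ioc_of_le zero_le_one).1
    (Complex.betaIntegral_convergent (u := a) (v := c) (by simpa) (by simpa))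
  refine IntegrableOn.congr_fun (Integrable.re hcpow) (fun t ht ↦ ?_) measurableSet_Ioc
  simp only [← ofReal_rpow_mul_one_sub_rpow (Ioc_subset_Icc_self ht), RCLike.re_to_complex,
    Complex.ofReal_re]

lemma incBeta_one_eq_beta (ha : 0 < a) (hc : 0 < c) : incBeta 1 a c = beta a c := by
  have hcpow : Complex.betaIntegral a c = (incBeta 1 a c : ℂ) := by
    rw [Complex.betaIntegral, incBeta, ← intervalIntegral.integral_ofReal]
    refine intervalIntegral.integral_congr fun t ht ↦ ?_
    rw [uIcc_of_le zero_le_one] at ht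
    exact (ofReal_rpow_mul_one_sub_rpow ht).symm
  rw [ProbabilityTheory.beta_eq_betaIntegralReal a c ha hc, hcpow, Complex.ofReal_re]

lemma incBeta_one_right (ha : 0 < a) (x : ℝ) : incBeta x a 1 = x ^ a / a := by
  simp [incBeta, integral_rpow (Or.inl (show -1 < a - 1 by linarith)), zero_rpow ha.ne']

end BetaIntegral

section ChangeOfVariables

variable {q : ℝ}

lemma hasDerivAt_div_const_add {u : ℝ} (hu : q + u ≠ 0) :
    HasDerivAt (fun u ↦ u / (q + u)) (q / (q + u) ^ 2) u := by
  refine ((hasDerivAt_id u).div ((hasDerivAt_id u).const_add q) hu).congr_deriv ?_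
  simp

lemma injOn_div_const_add (hq : 0 < q) : InjOn (fun u ↦ u / (q + u)) (Ioi 0) := by
  intro u (hu : 0 < u) v (hv : 0 < v) huv
  rw [div_eq_div_iff (by positivity) (by positivity)] at huv
  exact mul_left_cancel₀ hq.ne' (by linarith)

lemma image_div_const_add_Ioc (hq : 0 < q) {b : ℝ} (hb : 0 ≤ b) :
    (fun u ↦ u / (q + u)) '' Ioc 0 b = Ioc 0 (b / (q + b)) := by
  ext t
  constructor
  · rintro ⟨u, ⟨hu, hub⟩, rfl⟩
    refine ⟨by positivity, ?_⟩
    rw [div_le_div_iff₀ (by positivity) (by positivity)]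
    nlinarith
  · rintro ⟨ht, htb⟩
    rw [le_div_iff₀ (by positivity)] at htb
    have ht1 : 0 < 1 - t := by nlinarith
    refine ⟨q * t / (1 - t), ⟨by positivity, ?_⟩, ?_⟩
    · rw [div_le_iff₀ ht1]
      linarith
    · field_simp
      ring

lemma image_div_const_add_Ioi (hq : 0 < q) :
    (fun u ↦ u / (q + u)) '' Ioi 0 = Ioo 0 1 := by
  ext t
  constructor
  · rintro ⟨u, hu : 0 < u, rfl⟩
    exact ⟨by positivity, (div_lt_one (by positivity)).2 (by linarith)⟩
  · rintro ⟨ht, ht1⟩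
    have ht1 : 0 < 1 - t := sub_pos.2 ht1
    refine ⟨q * t / (1 - t), div_pos (mul_pos hq ht) ht1, ?_⟩
    field_simp
    ring

variable (a c : ℝ)

lemma abs_deriv_smul_rpow_mul_one_sub_rpow (hq : 0 < q) {u : ℝ} (hu : 0 < u) :
    |q / (q + u) ^ 2| • ((u / (q + u)) ^ (a - 1) * (1 - u / (q + u)) ^ (c - 1)) =
      q ^ c * (u ^ (a - 1) * (q + u) ^ (-(a + c))) := by
  have hqu : 0 < q + u := by positivity
  have hsub : 1 - u / (q + u) = q / (q + u) := by field_simp; ring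
  have hexp : (q + u) ^ (-(a + c)) =
      ((q + u) ^ (a - 1))⁻¹ * ((q + u) ^ (c - 1))⁻¹ * ((q + u) ^ 2)⁻¹ := by
    rw [← rpow_neg hqu.le, ← rpow_neg hqu.le, ← rpow_natCast, ← rpow_neg hqu.le,
      ← rpow_add hqu, ← rpow_add hqu]
    congr 1
    push_cast
    ring
  have hqc : q ^ c = q ^ (c - 1) * q := by rw [rpow_sub_one hq.ne', div_mul_cancel₀ _ hq.ne']
  rw [abs_of_pos (by positivity), smul_eq_mul, hsub, div_rpow hu.le hqu.le, div_rpow hq.le hqu.le,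
    hexp, hqc]
  ring

lemma integral_image_div_const_add (hq : 0 < q) {s : Set ℝ} (hs : MeasurableSet s)
    (hs0 : s ⊆ Ioi 0) :
    ∫ t in (fun u ↦ u / (q + u)) '' s, t ^ (a - 1) * (1 - t) ^ (c - 1) =
      q ^ c * ∫ u in s, u ^ (a - 1) * (q + u) ^ (-(a + c)) := by
  rw [integral_image_eq_integral_abs_deriv_smul hs
    (fun u hu ↦ (hasDerivAt_div_const_add (add_pos hq (hs0 hu)).ne').hasDerivWithinAt)
    ((injOn_div_const_add hq).mono hs0), ← integral_const_mul]
  exact setIntegral_congr_fun hs fun u hu ↦ abs_deriv_smul_rpow_mul_one_sub_rpow a c hq (hs0 hu)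

lemma setIntegral_Ioc_rpow_mul_const_add_rpow (hq : 0 < q) {b : ℝ} (hb : 0 ≤ b) :
    ∫ u in Ioc 0 b, u ^ (a - 1) * (q + u) ^ (-(a + c)) =
      q ^ (-c) * incBeta (b / (q + b)) a c := by
  rw [incBeta, intervalIntegral.integral_of_le (by positivity), ← image_div_const_add_Ioc hq hb,
    integral_image_div_const_add a c hq measurableSet_Ioc Ioc_subset_Ioi_self, ← mul_assoc,
    ← rpow_add hq, neg_add_cancel, rpow_zero, one_mul]

variable {a c}

lemma integral_Ioi_rpow_mul_const_add_rpow (hq : 0 < q) (ha : 0 < a) (hc : 0 < c) :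
    ∫ u in Ioi 0, u ^ (a - 1) * (q + u) ^ (-(a + c)) = q ^ (-c) * beta a c := by
  rw [← incBeta_one_eq_beta ha hc, incBeta, intervalIntegral.integral_of_le zero_le_one,
    integral_Ioc_eq_integral_Ioo, ← image_div_const_add_Ioi hq,
    integral_image_div_const_add a c hq measurableSet_Ioi Subset.rfl, ← mul_assoc,
    ← rpow_add hq, neg_add_cancel, rpow_zero, one_mul]

lemma integrableOn_Ioi_rpow_mul_const_add_rpow (hq : 0 < q) (ha : 0 < a) (hc : 0 < c) :
    IntegrableOn (fun u ↦ u ^ (a - 1) * (q + u) ^ (-(a + c))) (Ioi 0) := by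
  have hbeta := (integrableOn_rpow_mul_one_sub_rpow ha hc).mono_set Ioo_subset_Ioc_self
  rw [← image_div_const_add_Ioi hq,
    integrableOn_image_iff_integrableOn_abs_deriv_smul measurableSet_Ioi
      (fun u hu ↦ (hasDerivAt_div_const_add (add_pos hq hu).ne').hasDerivWithinAt)
      (injOn_div_const_add hq),
    integrableOn_congr_fun
      (fun u (hu : u ∈ Ioi 0) ↦ abs_deriv_smul_rpow_mul_one_sub_rpow a c hq hu)
      measurableSet_Ioi] at hbeta
  exact (integrable_const_mul_iff (isUnit_iff_ne_zero.2 (rpow_pos_of_pos hq c).ne') _).1 hbeta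

end ChangeOfVariables

section DoubleIntegral

variable {m b c : ℝ}

lemma setIntegral_Ioc_rpow_mul_one_add_add_rpow (hm : 0 < m) (hb : 0 ≤ b) {p : ℝ}
    (hp : 0 < 1 + p) :
    ∫ s in Ioc 0 b, s ^ (m - 1) * (1 + s + p) ^ (-(m + 1)) =
      (b / (b + 1 + p)) ^ m / (m * (1 + p)) := by
  simp_rw [add_right_comm 1 _ p]
  rw [setIntegral_Ioc_rpow_mul_const_add_rpow m 1 hp hb, incBeta_one_right hm, rpow_neg_one,
    add_comm (1 + p) b, ← add_assoc]
  field_simp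

lemma integral_Ioi_rpow_mul_one_add_add_rpow (hmc : 0 < m + c) (hc1 : c < 1) {s : ℝ}
    (hs : 0 < 1 + s) :
    ∫ p in Ioi 0, p ^ (-c) * (1 + s + p) ^ (-(m + 1)) =
      (1 + s) ^ (-(m + c)) * beta (1 - c) (m + c) := by
  rw [← integral_Ioi_rpow_mul_const_add_rpow hs (sub_pos.2 hc1) hmc]
  ring_nf

lemma integrableOn_Ioi_rpow_mul_one_add_add_rpow (hmc : 0 < m + c) (hc1 : c < 1) {s : ℝ}
    (hs : 0 < 1 + s) :
    IntegrableOn (fun p ↦ p ^ (-c) * (1 + s + p) ^ (-(m + 1))) (Ioi 0) := by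
  convert integrableOn_Ioi_rpow_mul_const_add_rpow hs (sub_pos.2 hc1) hmc using 4
  all_goals ring

lemma integrable_prod_rpow_mul_rpow_mul_rpow (hm : 0 < m) (hc0 : 0 < c) (hc1 : c < 1) :
    Integrable (Function.uncurry fun s p : ℝ ↦
        s ^ (m - 1) * (p ^ (-c) * (1 + s + p) ^ (-(m + 1))))
      ((volume.restrict (Ioi 0)).prod (volume.restrict (Ioi 0))) := by
  have hmeas : Measurable (Function.uncurry fun s p : ℝ ↦
      s ^ (m - 1) * (p ^ (-c) * (1 + s + p) ^ (-(m + 1)))) := by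
    unfold Function.uncurry
    fun_prop
  refine (integrable_prod_iff hmeas.aestronglyMeasurable).2 ⟨?_, ?_⟩
  · filter_upwards [ae_restrict_mem measurableSet_Ioi] with s (hs : 0 < s)
    exact (integrableOn_Ioi_rpow_mul_one_add_add_rpow (add_pos hm hc0) hc1
      (by positivity)).const_mul (s ^ (m - 1))
  · refine IntegrableOn.congr_fun ((integrableOn_Ioi_rpow_mul_const_add_rpow one_pos hm
      hc0).mul_const (beta (1 - c) (m + c))) (fun s (hs : 0 < s) ↦ ?_) measurableSet_Ioi
    have hnorm : ∀ p ∈ Ioi (0 : ℝ), ‖s ^ (m - 1) * (p ^ (-c) * (1 + s + p) ^ (-(m + 1)))‖ =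
        s ^ (m - 1) * (p ^ (-c) * (1 + s + p) ^ (-(m + 1))) :=
      fun p (hp : 0 < p) ↦ norm_of_nonneg (by positivity)
    simp only [Function.uncurry_apply_pair]
    rw [setIntegral_congr_fun measurableSet_Ioi hnorm, integral_const_mul,
      integral_Ioi_rpow_mul_one_add_add_rpow (add_pos hm hc0) hc1 (by positivity), mul_assoc]

lemma integral_Ioi_eq_beta_mul_incBeta (hm : 0 < m) (hb : 0 ≤ b) (hc0 : 0 < c) (hc1 : c < 1) :
    ∫ p in Ioi 0, p ^ (-c) * ((b / (b + 1 + p)) ^ m / (m * (1 + p))) =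
      beta (1 - c) (m + c) * incBeta (b / (1 + b)) m c := by
  calc
    _ = ∫ p in Ioi 0, ∫ s in Ioc 0 b, s ^ (m - 1) * (p ^ (-c) * (1 + s + p) ^ (-(m + 1))) := by
      refine setIntegral_congr_fun measurableSet_Ioi fun p (hp : 0 < p) ↦ ?_
      simp_rw [mul_left_comm _ (p ^ (-c)), integral_const_mul]
      rw [setIntegral_Ioc_rpow_mul_one_add_add_rpow hm hb (by positivity)]
    _ = ∫ s in Ioc 0 b, ∫ p in Ioi 0, s ^ (m - 1) * (p ^ (-c) * (1 + s + p) ^ (-(m + 1))) :=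
      (integral_integral_swap ((integrable_prod_rpow_mul_rpow_mul_rpow hm hc0 hc1).mono_measure
        (Measure.prod_mono (Measure.restrict_mono Ioc_subset_Ioi_self le_rfl) le_rfl))).symm
    _ = ∫ s in Ioc 0 b, beta (1 - c) (m + c) * (s ^ (m - 1) * (1 + s) ^ (-(m + c))) := by
      refine setIntegral_congr_fun measurableSet_Ioc fun s hs ↦ ?_
      have hs0 : 0 < s := hs.1
      rw [integral_const_mul,
        integral_Ioi_rpow_mul_one_add_add_rpow (add_pos hm hc0) hc1 (by positivity)]
      ring
    _ = beta (1 - c) (m + c) * incBeta (b / (1 + b)) m c := by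
      rw [integral_const_mul, setIntegral_Ioc_rpow_mul_const_add_rpow m c one_pos hb, one_rpow,
        one_mul]

lemma mul_beta_mul_beta_eq_pi_div_sin (hm : 0 < m) (hmc : 0 < m + c) :
    m * (beta (1 - c) (m + c) * beta m c) = π / sin (π * c) := by
  rw [← Gamma_mul_Gamma_one_sub, beta, beta, show 1 - c + (m + c) = m + 1 by ring,
    Gamma_add_one hm.ne']
  field_simp [(Gamma_pos_of_pos hm).ne', (Gamma_pos_of_pos hmc).ne']

end DoubleIntegral

theorem contour_integral_eq_regIncBeta_general (m b c : ℝ) (hm : 0 < m) (hb : 0 < b)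
    (hc0 : 0 < c) (hc1 : c < 1) :
    (b ^ m * (sin (π * c) / π)) * ∫ p in Ioi (0 : ℝ), 1 / (p ^ c * (1 + p) * (b + 1 + p) ^ m) =
      regIncBeta (b / (1 + b)) m c := by
  have hint : b ^ m * ∫ p in Ioi (0 : ℝ), 1 / (p ^ c * (1 + p) * (b + 1 + p) ^ m) =
      m * (beta (1 - c) (m + c) * incBeta (b / (1 + b)) m c) := by
    rw [← integral_Ioi_eq_beta_mul_incBeta hm hb.le hc0 hc1, ← integral_const_mul,
      ← integral_const_mul]
    refine setIntegral_congr_fun measurableSet_Ioi fun p (hp : 0 < p) ↦ ?_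
    rw [div_rpow hb.le (by positivity), rpow_neg hp.le]
    field_simp
  have hsin : sin (π * c) ≠ 0 :=
    (sin_pos_of_pos_of_lt_pi (by positivity) (mul_lt_of_lt_one_right pi_pos hc1)).ne'
  have hconst : sin (π * c) / π * (m * (beta (1 - c) (m + c) * beta m c)) = 1 := by
    rw [mul_beta_mul_beta_eq_pi_div_sin hm (add_pos hm hc0), div_mul_div_cancel₀ pi_ne_zero,
      div_self hsin]
  rw [mul_right_comm, hint, regIncBeta, incBeta_one_eq_beta hm hc0,
    eq_div_iff (ProbabilityTheory.beta_pos hm hc0).ne']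
  linear_combination incBeta (b / (1 + b)) m c * hconst

theorem contour_integral_eq_regIncBeta (m b : ℝ) (hm : 0 < m) (hb : 0 < b) :
    (b ^ m / (2 * Real.pi)) *
        ∫ p in Set.Ioi (0:ℝ), 1 / (Real.sqrt p * (1 + p) * (b + 1 + p) ^ m) =
      (1 / 2) * regIncBeta (b / (1 + b)) m (1 / 2) := by
  rw [← contour_integral_eq_regIncBeta_general m b (1 / 2) hm hb (by norm_num) (by norm_num),
    mul_one_div, sin_pi_div_two]
  simp_rw [sqrt_eq_rpow]
  ring
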